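/- (Lemma 1, general form) Suppose C = (f, g) is a CLIP-like model, I is describable by A, and C respects all descriptions in the strong sense that for every i ∈ I and every formula d ∈ D, i ⊨ d implies α(f(i), g(d)) = 1. Then there exists a nonzero vector v ∈ L such that every f(i) for i ∈ I is a positive scalar multiple of v, and every g(d) for a formula d ∈ D that is satisfied by some image (∃ j ∈ I, j ⊨ d) is a positive scalar multiple of v; i.e., there is a single ray containing f(I) and the embeddings of all satisfied descriptions. -/

import Mathlib

/-!
A formula `d` satisfied by an image `i` has cosine similarity `1` with `f i`, so by the equality
case of Cauchy–Schwarz (`real_inner_div_norm_mul_norm_eq_one_iff`) `g d` is a positive multiple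
of `f i`. A tautology `a ∨ ¬a` is satisfied by every image, so all `f i` lie on the ray of its
embedding; any satisfied formula is then on that ray as well. An atom `a` exists by
describability once there is an image; with no images any nonzero vector works.
-/

open scoped RealInnerProductSpace

/-- Cosine similarity between two vectors in a real inner product space. -/
noncomputable def cosSim {L : Type*} [NormedAddCommGroup L] [InnerProductSpace ℝ L]
    (x y : L) : ℝ := ⟪x, y⟫ / (‖x‖ * ‖y‖)

/-- Propositional formulas over a set `A` of atomic descriptions. -/
inductive Formula (A : Type*) : Type _
  | atom : A → Formula A
  | neg  : Formula A → Formula A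
  | or   : Formula A → Formula A → Formula A
  | and  : Formula A → Formula A → Formula A

variable {I A L : Type*} [NormedAddCommGroup L] [InnerProductSpace ℝ L]

/-- Satisfaction `i ⊨ d`, defined by recursion on the formula `d`. -/
def Sat (f : I → L) (g : Formula A → L) (i : I) : Formula A → Prop
  | .atom a => cosSim (f i) (g (.atom a)) > cosSim (f i) (g (.neg (.atom a)))
  | .neg d  => ¬ Sat f g i d
  | .or d e => Sat f g i d ∨ Sat f g i e
  | .and d e => Sat f g i d ∧ Sat f g i e

/-- `I` is describable by `A`. -/
def Describable (f : I → L) (g : Formula A → L) : Prop :=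
  (∀ i : I, ∃ a : A, Sat f g i (.atom a)) ∧ (∀ a : A, ∃ i : I, Sat f g i (.atom a))

/-- `(I, A)` is separable. -/
def Separable (f : I → L) (g : Formula A → L) : Prop :=
  (∀ i : I, ∃ a : A, Sat f g i (.neg (.atom a))) ∧
  (∀ a : A, ∃ i : I, Sat f g i (.neg (.atom a)))

/-- `C` respects basic descriptions. -/
def RespectsBasic (f : I → L) (g : Formula A → L) : Prop :=
  ∀ (i : I) (a : A), Sat f g i (.atom a) → cosSim (f i) (g (.atom a)) = 1

/-- `C` respects negation. -/
def RespectsNeg (f : I → L) (g : Formula A → L) : Prop :=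
  ∀ (i : I) (a : A), Sat f g i (.neg (.atom a)) → cosSim (f i) (g (.atom a)) = -1

/-- `C` respects disjunction. -/
def RespectsDisj (f : I → L) (g : Formula A → L) : Prop :=
  ∀ (i : I) (d e : Formula A), Sat f g i (.or d e) → cosSim (f i) (g (.or d e)) = 1

/-- `C` respects conjunction. -/
def RespectsConj (f : I → L) (g : Formula A → L) : Prop :=
  ∀ (i : I) (d e : Formula A), Sat f g i (.and d e) → cosSim (f i) (g (.and d e)) = 1

/-- **Lemma 1 (general form).** If `C` respects all descriptions in the strong sense, then
there is a single ray containing `f(I)` and the embeddings of all satisfied descriptions. -/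
theorem lemma1_general
    [Nontrivial L]
    (f : I → L) (g : Formula A → L)
    (hf : ∀ i : I, f i ≠ 0) (hg : ∀ d : Formula A, g d ≠ 0)
    (hdesc : Describable f g)
    (hstrong : ∀ (i : I) (d : Formula A), Sat f g i d → cosSim (f i) (g d) = 1) :
    ∃ v : L, v ≠ 0 ∧
      (∀ i : I, ∃ t : ℝ, 0 < t ∧ f i = t • v) ∧
      (∀ d : Formula A, (∃ j : I, Sat f g j d) →
        ∃ s : ℝ, 0 < s ∧ g d = s • v) := by
  rcases isEmpty_or_nonempty I with hI | ⟨⟨i₀⟩⟩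
  · obtain ⟨v, hv⟩ := exists_ne (0 : L)
    exact ⟨v, hv, fun i => isEmptyElim i, fun _ ⟨j, _⟩ => isEmptyElim j⟩
  · obtain ⟨a, -⟩ := hdesc.1 i₀
    -- The tautology `a ∨ ¬a` holds at every image, so its embedding spans the common ray.
    have key : ∀ i : I, ∃ t : ℝ, 0 < t ∧ f i = t • g (.or (.atom a) (.neg (.atom a))) := by
      intro i
      obtain ⟨-, r, hr, h⟩ := (real_inner_div_norm_mul_norm_eq_one_iff _ _).1
        (hstrong i (.or (.atom a) (.neg (.atom a))) (Classical.em _))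
      exact ⟨r⁻¹, inv_pos.2 hr, by rw [h, inv_smul_smul₀ hr.ne']⟩
    refine ⟨_, hg _, key, ?_⟩
    rintro d ⟨j, hj⟩
    obtain ⟨-, r, hr, h⟩ := (real_inner_div_norm_mul_norm_eq_one_iff _ _).1 (hstrong j d hj)
    obtain ⟨t, ht, hft⟩ := key j
    exact ⟨r * t, mul_pos hr ht, by rw [h, hft, smul_smul]⟩
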